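/- Assume βn/k² ≥ 10 and that for some r ∈ [k] one has λ_r − λ_{r+1} > 16 · max{ ‖E‖, √(k²/(βn)) · λ_{r+1} } (with λ_{k+1} := 0 when needed). Then for every i ∈ [n], ‖Û_{1:r} Û_{1:r}ᵀ − Û_{−i,1:r} Û_{−i,1:r}ᵀ‖_F ≤ (128 · max{‖E‖, √(k²/(βn)) λ_{r+1}} / (λ_r − λ_{r+1})) · ( √(kr/(βn)) + ‖Û_{−i,1:r} Û_{−i,1:r}ᵀ ε_i‖ / λ_r ). -/

import Mathlib

open Matrix MeasureTheory ProbabilityTheory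
open scoped BigOperators ENNReal NNReal

noncomputable section

/-- Euclidean norm of a vector in `Fin p → ℝ`. -/
def vnorm {p : ℕ} (x : Fin p → ℝ) : ℝ := Real.sqrt (∑ i, (x i) ^ 2)

/-- Frobenius norm of a real matrix. -/
def fnorm {m n : ℕ} (A : Matrix (Fin m) (Fin n) ℝ) : ℝ :=
  Real.sqrt (∑ i, ∑ j, (A i j) ^ 2)

/-- Operator (spectral) norm of a real matrix. -/
def opnorm {m n : ℕ} (A : Matrix (Fin m) (Fin n) ℝ) : ℝ :=
  ‖LinearMap.toContinuousLinearMap (Matrix.toEuclideanLin A)‖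

/-- A (full) singular value decomposition of a real `p × n` matrix `A`:
`A = U D Vᵀ` with `U, V` orthogonal and `D` the rectangular diagonal matrix with the
nonincreasing nonnegative singular values `sv 0 ≥ sv 1 ≥ ⋯` on the diagonal
(0-indexed, so the math `σ_i` is `sv (i-1)`), extended by zero beyond `min p n`. -/
structure SVDData (p n : ℕ) (A : Matrix (Fin p) (Fin n) ℝ) where
  U : Matrix (Fin p) (Fin p) ℝ
  V : Matrix (Fin n) (Fin n) ℝ
  sv : ℕ → ℝ
  hU : Uᵀ * U = 1
  hV : Vᵀ * V = 1
  sv_anti : ∀ i j : ℕ, i ≤ j → sv j ≤ sv i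
  sv_nonneg : ∀ i, 0 ≤ sv i
  sv_zero : ∀ j, min p n ≤ j → sv j = 0
  decomp : A = U * (Matrix.of fun (i : Fin p) (j : Fin n) => if (i : ℕ) = (j : ℕ) then sv (i : ℕ) else 0) * Vᵀ

/-- Projection matrix `U_{1:r} U_{1:r}ᵀ` onto the span of the first `r` columns of `U`. -/
def projr {p : ℕ} (U : Matrix (Fin p) (Fin p) ℝ) (r : ℕ) : Matrix (Fin p) (Fin p) ℝ :=
  Matrix.of fun i j => ∑ l : Fin p, if (l : ℕ) < r then U i l * U j l else 0

/-- The `l`-th (0-indexed) column of a matrix, as a vector. -/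
def matCol {p q : ℕ} (U : Matrix (Fin p) (Fin q) ℝ) (l : ℕ) : Fin p → ℝ :=
  fun i => if h : l < q then U i ⟨l, h⟩ else 0

/-- `β` for a cluster assignment: `(k/n) ·` (size of the smallest cluster),
so that `β·n/k` is the size of the smallest cluster. -/
def betaMin (n k : ℕ) (z : Fin n → Fin k) : ℝ :=
  ((k : ℝ) / n) * ⨅ a : Fin k, ((Finset.univ.filter fun i => z i = a).card : ℝ)

/-- Minimum pairwise distance between the centers. -/
def Delta {p k : ℕ} (θ : Fin k → Fin p → ℝ) : ℝ :=
  ⨅ q : {q : Fin k × Fin k // q.1 ≠ q.2}, vnorm (fun i => θ q.1.1 i - θ q.1.2 i)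

/-- Misclustering error `ℓ(z, z*)`. -/
def miscl {n k : ℕ} (z zs : Fin n → Fin k) : ℝ :=
  (⨅ φ : Equiv.Perm (Fin k), ((Finset.univ.filter fun i => z i ≠ φ (zs i)).card : ℝ)) / n

/-- `(z, c)` is a global minimizer of the k-means objective for the columns of `W * X`. -/
def IsKMeans {p n k : ℕ} (W : Matrix (Fin p) (Fin p) ℝ) (X : Matrix (Fin p) (Fin n) ℝ)
    (z : Fin n → Fin k) (c : Fin k → Fin p → ℝ) : Prop :=
  ∀ (z' : Fin n → Fin k) (c' : Fin k → Fin p → ℝ),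
    ∑ i, ∑ a, (W.mulVec (fun b => X b i) a - c (z i) a) ^ 2 ≤
      ∑ i, ∑ a, (W.mulVec (fun b => X b i) a - c' (z' i) a) ^ 2

lemma pq_dot {p : ℕ} (x : Fin p → ℝ) : vnorm x ^ 2 = x ⬝ᵥ x := by
  unfold vnorm
  rw [Real.sq_sqrt (by positivity)]
  simp [dotProduct, sq]

lemma pq_sq {p : ℕ} (x : Fin p → ℝ) : vnorm x ^ 2 = ∑ i, x i ^ 2 := by
  unfold vnorm
  rw [Real.sq_sqrt (by positivity)]

lemma pq_nonneg {p : ℕ} (x : Fin p → ℝ) : 0 ≤ vnorm x := Real.sqrt_nonneg _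

lemma pq_norm {p : ℕ} (x : Fin p → ℝ) : vnorm x = ‖(WithLp.toLp 2 x : EuclideanSpace ℝ (Fin p))‖ := by
  rw [EuclideanSpace.norm_eq]; simp [vnorm]

lemma pq_add {p : ℕ} (x y : Fin p → ℝ) : vnorm (x + y) ≤ vnorm x + vnorm y := by
  simp only [pq_norm]
  exact norm_add_le _ _

lemma pq_cs {p : ℕ} (x y : Fin p → ℝ) : x ⬝ᵥ y ≤ vnorm x * vnorm y := by
  unfold vnorm dotProduct
  exact Real.sum_mul_le_sqrt_mul_sqrt _ _ _

lemma pq_op {m n : ℕ} (A : Matrix (Fin m) (Fin n) ℝ) (x : Fin n → ℝ) :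
    vnorm (A *ᵥ x) ≤ opnorm A * vnorm x := by
  simp only [pq_norm]
  exact (LinearMap.toContinuousLinearMap (Matrix.toEuclideanLin A)).le_opNorm (WithLp.toLp 2 x)

lemma pq_op_nonneg {m n : ℕ} (A : Matrix (Fin m) (Fin n) ℝ) : 0 ≤ opnorm A := norm_nonneg _

lemma pq_opT {m n : ℕ} (A : Matrix (Fin m) (Fin n) ℝ) (x : Fin m → ℝ) :
    vnorm (Aᵀ *ᵥ x) ≤ opnorm A * vnorm x := by
  have h1 : vnorm (Aᵀ *ᵥ x) ^ 2 ≤ vnorm x * (opnorm A * vnorm (Aᵀ *ᵥ x)) := by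
    have : vnorm (Aᵀ *ᵥ x) ^ 2 = x ⬝ᵥ (A *ᵥ (Aᵀ *ᵥ x)) := by
      rw [pq_dot, dotProduct_mulVec x A, ← mulVec_transpose]
    rw [this]
    exact (pq_cs _ _).trans (mul_le_mul_of_nonneg_left (pq_op _ _) (pq_nonneg _))
  rcases (pq_nonneg (Aᵀ *ᵥ x)).eq_or_lt with h | h
  · rw [← h]; exact mul_nonneg (pq_op_nonneg _) (pq_nonneg _)
  · nlinarith

lemma pq_orth {p : ℕ} (U : Matrix (Fin p) (Fin p) ℝ) (hU : Uᵀ * U = 1) (x : Fin p → ℝ) :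
    vnorm (U *ᵥ x) = vnorm x := by
  have : vnorm (U *ᵥ x) ^ 2 = vnorm x ^ 2 := by
    rw [pq_dot, pq_dot, dotProduct_mulVec, ← mulVec_transpose, mulVec_mulVec, hU, one_mulVec]
  exact (sq_eq_sq₀ (pq_nonneg _) (pq_nonneg _)).1 this

lemma pq_orthT {p : ℕ} (U : Matrix (Fin p) (Fin p) ℝ) (hU : Uᵀ * U = 1) (x : Fin p → ℝ) :
    vnorm (Uᵀ *ᵥ x) = vnorm x :=
  pq_orth Uᵀ (by rw [transpose_transpose]; exact mul_eq_one_comm.1 hU) x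

lemma pq_gram {p n : ℕ} {A : Matrix (Fin p) (Fin n) ℝ} (D : SVDData p n A) :
    A * Aᵀ = D.U * diagonal (fun l : Fin p => D.sv l ^ 2) * D.Uᵀ := by
  set S : Matrix (Fin p) (Fin n) ℝ :=
    Matrix.of fun (i : Fin p) (j : Fin n) => if (i : ℕ) = (j : ℕ) then D.sv (i : ℕ) else 0 with hS
  have hd : A = D.U * S * D.Vᵀ := D.decomp
  have hSS : S * Sᵀ = diagonal (fun l : Fin p => D.sv l ^ 2) := by
    ext l l'
    simp only [mul_apply, transpose_apply, hS, of_apply, diagonal_apply]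
    by_cases h : l = l'
    · subst h
      simp only [if_true]
      by_cases hn : (l : ℕ) < n
      · rw [Finset.sum_eq_single ⟨l, hn⟩]
        · simp [sq]
        · intro b _ hb
          have : ¬ ((l : ℕ) = b) := fun h => hb (Fin.ext h.symm)
          simp [this]
        · simp
      · rw [D.sv_zero l (by omega)]
        simp
    · rw [if_neg h]
      apply Finset.sum_eq_zero
      intro j _
      by_cases h1 : (l : ℕ) = j
      · have : ¬ ((l' : ℕ) = j) := fun h2 => h (Fin.ext (by omega))
        simp [this]
      · simp [h1]
  calc A * Aᵀ = D.U * S * (D.Vᵀ * D.V) * Sᵀ * D.Uᵀ := by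
        conv_lhs => rw [hd]
        simp only [transpose_mul, transpose_transpose, Matrix.mul_assoc]
    _ = _ := by rw [D.hV, Matrix.mul_one, Matrix.mul_assoc D.U S, hSS]

lemma pq_svd {p n : ℕ} {A : Matrix (Fin p) (Fin n) ℝ} (D : SVDData p n A) (x : Fin p → ℝ) :
    vnorm (Aᵀ *ᵥ x) ^ 2 = ∑ l : Fin p, D.sv l ^ 2 * (D.Uᵀ *ᵥ x) l ^ 2 := by
  rw [pq_dot, dotProduct_mulVec, ← mulVec_transpose, mulVec_mulVec, transpose_transpose, pq_gram D,
    ← mulVec_mulVec, ← mulVec_mulVec, dotProduct_comm, dotProduct_mulVec, ← mulVec_transpose]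
  simp only [dotProduct, mulVec_diagonal]
  exact Finset.sum_congr rfl fun l _ => by ring

lemma pq_upper {p n : ℕ} {A : Matrix (Fin p) (Fin n) ℝ} (D : SVDData p n A) (x : Fin p → ℝ) (j : ℕ)
    (hx : ∀ l : Fin p, (l : ℕ) < j → (D.Uᵀ *ᵥ x) l = 0) :
    vnorm (Aᵀ *ᵥ x) ≤ D.sv j * vnorm x := by
  refine (sq_le_sq₀ (pq_nonneg _) (mul_nonneg (D.sv_nonneg _) (pq_nonneg _))).1 ?_
  rw [pq_svd D, mul_pow, ← pq_orthT D.U D.hU x, pq_sq, Finset.mul_sum]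
  apply Finset.sum_le_sum
  intro l _
  by_cases h : (l : ℕ) < j
  · simp [hx l h]
  · have h1 := D.sv_anti j l (by omega)
    have h2 := D.sv_nonneg l
    gcongr

lemma pq_lower {p n : ℕ} {A : Matrix (Fin p) (Fin n) ℝ} (D : SVDData p n A) (x : Fin p → ℝ) (j : ℕ)
    (hx : ∀ l : Fin p, j < (l : ℕ) → (D.Uᵀ *ᵥ x) l = 0) :
    D.sv j * vnorm x ≤ vnorm (Aᵀ *ᵥ x) := by
  refine (sq_le_sq₀ (mul_nonneg (D.sv_nonneg _) (pq_nonneg _)) (pq_nonneg _)).1 ?_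
  rw [pq_svd D, mul_pow, ← pq_orthT D.U D.hU x, pq_sq, Finset.mul_sum]
  apply Finset.sum_le_sum
  intro l _
  by_cases h : j < (l : ℕ)
  · simp [hx l h]
  · have h1 := D.sv_anti l j (by omega)
    have h2 := D.sv_nonneg j
    gcongr

/-- the dimension count -/
lemma pq_dim {p : ℕ} (U W : Matrix (Fin p) (Fin p) ℝ) (j : ℕ) (hj : j < p) :
    ∃ x : Fin p → ℝ, vnorm x = 1 ∧ (∀ l : Fin p, j < (l : ℕ) → (Uᵀ *ᵥ x) l = 0) ∧
      (∀ l : Fin p, (l : ℕ) < j → (Wᵀ *ᵥ x) l = 0) := by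
  -- constraints
  let f : (Fin p → ℝ) →ₗ[ℝ] ({l : Fin p // l ≠ ⟨j, hj⟩} → ℝ) :=
    LinearMap.pi fun l => if j < (l.1 : ℕ) then (LinearMap.proj l.1) ∘ₗ (Matrix.mulVecLin Uᵀ)
      else (LinearMap.proj l.1) ∘ₗ (Matrix.mulVecLin Wᵀ)
  have hlt : Module.finrank ℝ ({l : Fin p // l ≠ ⟨j, hj⟩} → ℝ) < Module.finrank ℝ (Fin p → ℝ) := by
    simp only [Module.finrank_fintype_fun_eq_card]
    exact Fintype.card_subtype_lt (x := ⟨j, hj⟩) (by simp)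
  have hk := LinearMap.ker_ne_bot_of_finrank_lt (f := f) hlt
  obtain ⟨x, hx, hx0⟩ := (Submodule.ne_bot_iff _).1 hk
  have hfx : ∀ l, f x l = 0 := fun l => by rw [LinearMap.mem_ker.1 hx]; rfl
  have hn : vnorm x ≠ 0 := by
    rw [pq_norm, norm_ne_zero_iff]
    intro h
    exact hx0 (by simpa using h)
  refine ⟨(vnorm x)⁻¹ • x, ?_, ?_, ?_⟩
  · rw [pq_norm, WithLp.toLp_smul, norm_smul, ← pq_norm, norm_inv, Real.norm_of_nonneg (pq_nonneg x)]
    exact inv_mul_cancel₀ hn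
  · intro l hl
    have := hfx ⟨l, fun h => by simp [h] at hl⟩
    simp [f, hl] at this
    rw [mulVec_smul, Pi.smul_apply, mulVec_transpose, this, smul_zero]
  · intro l hl
    have := hfx ⟨l, fun h => by simp [h] at hl⟩
    simp [f, not_lt.2 hl.le] at this
    rw [mulVec_smul, Pi.smul_apply, mulVec_transpose, this, smul_zero]

lemma pq_sqsum_orth {p : ℕ} (G : Matrix (Fin p) (Fin p) ℝ) (hG : Gᵀ * G = 1) (j : Fin p) :
    ∑ l, G l j ^ 2 = 1 := by
  have := congrFun (congrFun hG j) j
  simpa [mul_apply, sq] using this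

lemma pq_projr {p : ℕ} (U : Matrix (Fin p) (Fin p) ℝ) (r : ℕ) :
    projr U r = U * diagonal (fun l : Fin p => if (l : ℕ) < r then (1 : ℝ) else 0) * Uᵀ := by
  ext a b
  rw [mul_apply]
  simp only [projr, of_apply, mul_diagonal, transpose_apply]
  exact Finset.sum_congr rfl fun l _ => by split_ifs <;> simp

lemma pq_fsq {m n : ℕ} (A : Matrix (Fin m) (Fin n) ℝ) : fnorm A ^ 2 = (Aᵀ * A).trace := by
  unfold fnorm
  rw [Real.sq_sqrt (by positivity), Finset.sum_comm]
  simp [trace, mul_apply, sq]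

lemma pq_forth {p : ℕ} (W U A : Matrix (Fin p) (Fin p) ℝ) (hW : Wᵀ * W = 1) (hU : Uᵀ * U = 1) :
    fnorm A ^ 2 = fnorm (Wᵀ * A * U) ^ 2 := by
  have hW' := mul_eq_one_comm.1 hW
  have hU' := mul_eq_one_comm.1 hU
  rw [pq_fsq, pq_fsq]
  have : (Wᵀ * A * U)ᵀ * (Wᵀ * A * U) = Uᵀ * (Aᵀ * A * U) := by
    calc _ = Uᵀ * (Aᵀ * (W * Wᵀ) * A * U) := by
          simp only [transpose_mul, transpose_transpose, Matrix.mul_assoc]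
      _ = _ := by rw [hW', Matrix.mul_one]
  rw [this, trace_mul_comm Uᵀ, Matrix.mul_assoc _ U, hU', Matrix.mul_one]

lemma pq_projdiff {p : ℕ} (W U : Matrix (Fin p) (Fin p) ℝ) (hW : Wᵀ * W = 1) (hU : Uᵀ * U = 1)
    (r : ℕ) : fnorm (projr W r - projr U r) ^ 2 =
      2 * ∑ l : Fin p, ∑ j : Fin p, if ¬ (l : ℕ) < r ∧ (j : ℕ) < r then (Wᵀ * U) l j ^ 2 else 0 := by
  have hW' := mul_eq_one_comm.1 hW
  have hU' := mul_eq_one_comm.1 hU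
  set G := Wᵀ * U with hG
  have hGG : Gᵀ * G = 1 := by
    rw [hG, transpose_mul, transpose_transpose, Matrix.mul_assoc, ← Matrix.mul_assoc W, hW',
      Matrix.one_mul, hU]
  have hGG' : Gᵀᵀ * Gᵀ = 1 := by rw [transpose_transpose]; exact mul_eq_one_comm.1 hGG
  rw [pq_forth W U _ hW hU]
  set I : Matrix (Fin p) (Fin p) ℝ := diagonal (fun l : Fin p => if (l : ℕ) < r then (1 : ℝ) else 0)
  have h1 : Wᵀ * (projr W r - projr U r) * U = I * G - G * I := by
    rw [pq_projr, pq_projr, Matrix.mul_sub, Matrix.sub_mul]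
    congr 1
    · calc _ = (Wᵀ * W) * I * (Wᵀ * U) := by simp only [Matrix.mul_assoc, I]
        _ = _ := by rw [hW, Matrix.one_mul]
    · calc _ = (Wᵀ * U) * I * (Uᵀ * U) := by simp only [Matrix.mul_assoc, I]
        _ = _ := by rw [hU, Matrix.mul_one]
  rw [h1]
  unfold fnorm
  rw [Real.sq_sqrt (by positivity)]
  have e1 : ∑ l : Fin p, ∑ j : Fin p, (if (l : ℕ) < r then G l j ^ 2 else 0) =
      ∑ l : Fin p, if (l : ℕ) < r then (1 : ℝ) else 0 := by
    refine Finset.sum_congr rfl fun l _ => ?_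
    have := pq_sqsum_orth Gᵀ hGG' l
    simp only [transpose_apply] at this
    split_ifs
    · exact this
    · simp
  have e2 : ∑ l : Fin p, ∑ j : Fin p, (if (j : ℕ) < r then G l j ^ 2 else 0) =
      ∑ l : Fin p, if (l : ℕ) < r then (1 : ℝ) else 0 := by
    rw [Finset.sum_comm]
    refine Finset.sum_congr rfl fun l _ => ?_
    have := pq_sqsum_orth G hGG l
    split_ifs
    · exact this
    · simp
  have e3 : ∑ l : Fin p, ∑ j : Fin p, (I * G - G * I) l j ^ 2 =
      ∑ l : Fin p, ∑ j : Fin p, (2 * (if ¬ (l : ℕ) < r ∧ (j : ℕ) < r then G l j ^ 2 else 0)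
        + (if (l : ℕ) < r then G l j ^ 2 else 0) - (if (j : ℕ) < r then G l j ^ 2 else 0)) := by
    refine Finset.sum_congr rfl fun l _ => Finset.sum_congr rfl fun j _ => ?_
    simp only [Matrix.sub_apply, I, diagonal_mul, mul_diagonal]
    by_cases h1 : (l : ℕ) < r <;> by_cases h2 : (j : ℕ) < r <;> simp [h1, h2] <;> ring
  rw [e3]
  simp only [Finset.sum_add_distrib, Finset.sum_sub_distrib, ← Finset.mul_sum]
  rw [e1, e2]; ring

/-- core sin-theta estimate for a rank-one update -/
lemma pq_core {p : ℕ} (G : Matrix (Fin p) (Fin p) ℝ) (hG : Gᵀ * G = 1) (b σ τ : Fin p → ℝ) (r : ℕ)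
    (c s2 : ℝ) (hc : 0 < c)
    (hσ : ∀ j : Fin p, (j : ℕ) < r → 0 < σ j)
    (hid : ∀ l j, τ l ^ 2 * G l j = σ j ^ 2 * G l j + (G *ᵥ b) l * b j)
    (hgap : ∀ l j : Fin p, ¬ (l : ℕ) < r → (j : ℕ) < r → c * σ j ≤ σ j ^ 2 - τ l ^ 2)
    (hs : ∑ j : Fin p, (if (j : ℕ) < r then 0 else b j) ^ 2 ≤ s2) :
    (∑ l : Fin p, ∑ j : Fin p, if ¬ (l : ℕ) < r ∧ (j : ℕ) < r then G l j ^ 2 else 0) ≤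
      s2 / c ^ 2 * ∑ j : Fin p, (if (j : ℕ) < r then b j / σ j else 0) ^ 2 := by
  set b' : Fin p → ℝ := fun j => if (j : ℕ) < r then 0 else b j with hb'
  have hA : ∑ l, (G *ᵥ b') l ^ 2 ≤ s2 := by
    rw [← pq_sq, pq_orth G hG, pq_sq]; exact hs
  have hal : ∀ l : Fin p, ¬ (l : ℕ) < r → (G *ᵥ b) l ^ 2 ≤ (G *ᵥ b') l ^ 2 := by
    intro l hl
    set a := (G *ᵥ b) l with ha
    set t : ℝ := ∑ j : Fin p, if (j : ℕ) < r then b j ^ 2 / (σ j ^ 2 - τ l ^ 2) else 0 with ht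
    have ht0 : 0 ≤ t := by
      apply Finset.sum_nonneg
      intro j _
      split_ifs with h
      · have := hgap l j hl h
        have := hσ j h
        have : 0 < c * σ j := by positivity
        exact div_nonneg (sq_nonneg _) (by linarith)
      · exact le_rfl
    have hh : (G *ᵥ b') l = a * (1 + t) := by
      have : a = (G *ᵥ b') l - a * t := by
        conv_lhs => rw [ha]
        simp only [mulVec, dotProduct]
        rw [ht, Finset.mul_sum, ← Finset.sum_sub_distrib]
        refine Finset.sum_congr rfl fun j _ => ?_
        simp only [hb']
        split_ifs with h
        · have h1 := hgap l j hl h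
          have h2 := hσ j h
          have h3 : 0 < c * σ j := by positivity
          have h4 : σ j ^ 2 - τ l ^ 2 ≠ 0 := by linarith
          have h5 := hid l j
          rw [← ha] at h5
          field_simp
          linear_combination (-b j) * h5
        · ring
      linarith
    rw [hh, mul_pow]
    nlinarith [sq_nonneg a, mul_nonneg (sq_nonneg a) ht0, mul_nonneg (sq_nonneg a) (sq_nonneg t)]
  have hsum : ∑ l : Fin p, (if ¬ (l : ℕ) < r then (G *ᵥ b) l ^ 2 else 0) ≤ s2 := by
    refine le_trans (Finset.sum_le_sum fun l _ => ?_) hA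
    split_ifs with h
    · exact sq_nonneg _
    · exact hal l h
  have hT : 0 ≤ ∑ j : Fin p, (if (j : ℕ) < r then b j / σ j else 0) ^ 2 :=
    Finset.sum_nonneg fun _ _ => sq_nonneg _
  calc _ ≤ ∑ l : Fin p, ∑ j : Fin p, ((if ¬ (l : ℕ) < r then (G *ᵥ b) l ^ 2 else 0) / c ^ 2) *
        (if (j : ℕ) < r then b j / σ j else 0) ^ 2 := by
        refine Finset.sum_le_sum fun l _ => Finset.sum_le_sum fun j _ => ?_
        by_cases hl : (l : ℕ) < r
        · simp [hl]
        by_cases hj : (j : ℕ) < r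
        · simp only [hl, hj, not_false_eq_true, and_self, if_true]
          have h1 := hgap l j hl hj
          have h2 := hσ j hj
          have h3 : 0 < c * σ j := by positivity
          have h5 := hid l j
          have h6 : (σ j ^ 2 - τ l ^ 2) * G l j = - ((G *ᵥ b) l * b j) := by linarith
          have h7 : (c * σ j) ^ 2 * G l j ^ 2 ≤ ((G *ᵥ b) l * b j) ^ 2 := by
            calc _ ≤ (σ j ^ 2 - τ l ^ 2) ^ 2 * G l j ^ 2 := by gcongr
              _ = _ := by rw [← mul_pow, h6, neg_sq]
          have h8 : (G *ᵥ b) l ^ 2 / c ^ 2 * (b j / σ j) ^ 2 = ((G *ᵥ b) l * b j) ^ 2 / (c * σ j) ^ 2 := by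
            field_simp
          rw [h8, le_div_iff₀ (by positivity)]
          linarith
        · simp [hl, hj]
    _ = (∑ l : Fin p, (if ¬ (l : ℕ) < r then (G *ᵥ b) l ^ 2 else 0)) / c ^ 2 *
        ∑ j : Fin p, (if (j : ℕ) < r then b j / σ j else 0) ^ 2 := by
        rw [Finset.sum_div, Finset.sum_mul_sum]
    _ ≤ _ := by gcongr

lemma pq_split {p n : ℕ} (X : Matrix (Fin p) (Fin (n + 1)) ℝ) (i : Fin (n + 1)) (x : Fin p → ℝ) :
    vnorm (Xᵀ *ᵥ x) ^ 2 = ((fun a => X a i) ⬝ᵥ x) ^ 2 +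
      vnorm ((X.submatrix id i.succAbove)ᵀ *ᵥ x) ^ 2 := by
  rw [pq_sq, pq_sq, Fin.sum_univ_succAbove _ i]
  rfl

lemma pq_gramsplit {p n : ℕ} (X : Matrix (Fin p) (Fin (n + 1)) ℝ) (i : Fin (n + 1)) :
    X * Xᵀ = vecMulVec (fun a => X a i) (fun a => X a i) +
      X.submatrix id i.succAbove * (X.submatrix id i.succAbove)ᵀ := by
  ext a b
  rw [Matrix.add_apply, mul_apply, mul_apply, Fin.sum_univ_succAbove _ i]
  rfl

lemma pq_subE {p n : ℕ} (E : Matrix (Fin p) (Fin (n + 1)) ℝ) (i : Fin (n + 1)) (x : Fin p → ℝ) :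
    vnorm ((E.submatrix id i.succAbove)ᵀ *ᵥ x) ≤ opnorm E * vnorm x := by
  refine le_trans ?_ (pq_opT E x)
  refine (sq_le_sq₀ (pq_nonneg _) (pq_nonneg _)).1 ?_
  rw [pq_split E i]
  nlinarith [sq_nonneg ((fun a => E a i) ⬝ᵥ x)]

lemma pq_col {p n : ℕ} (E : Matrix (Fin p) (Fin n) ℝ) (i : Fin n) :
    vnorm (fun a => E a i) ≤ opnorm E := by
  have h := pq_op E (Pi.single i 1)
  have h1 : vnorm (Pi.single i (1 : ℝ) : Fin n → ℝ) = 1 := by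
    unfold vnorm
    rw [Finset.sum_eq_single i] <;> simp +contextual [Pi.single_apply]
  rw [h1, mul_one, Matrix.mulVec_single_one] at h
  exact h

lemma pq_neg {p : ℕ} (x : Fin p → ℝ) : vnorm (-x) = vnorm x := by simp [vnorm]

lemma pq_ident {p n : ℕ} (X : Matrix (Fin p) (Fin (n + 1)) ℝ) (i : Fin (n + 1))
    (DX : SVDData p (n + 1) X) (DXi : SVDData p n (X.submatrix id i.succAbove)) (l j : Fin p) :
    DX.sv l ^ 2 * (DX.Uᵀ * DXi.U) l j = DXi.sv j ^ 2 * (DX.Uᵀ * DXi.U) l j +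
      (DX.Uᵀ *ᵥ (fun a => X a i)) l * (DXi.Uᵀ *ᵥ (fun a => X a i)) j := by
  have h := pq_gramsplit X i
  rw [pq_gram DX, pq_gram DXi] at h
  have h2 := congrArg (fun A => DX.Uᵀ * A * DXi.U) h
  simp only [Matrix.mul_add, Matrix.add_mul] at h2
  have h3 : DX.Uᵀ * (DX.U * diagonal (fun l : Fin p => DX.sv l ^ 2) * DX.Uᵀ) * DXi.U =
      diagonal (fun l : Fin p => DX.sv l ^ 2) * (DX.Uᵀ * DXi.U) := by
    calc _ = (DX.Uᵀ * DX.U) * diagonal (fun l : Fin p => DX.sv l ^ 2) * (DX.Uᵀ * DXi.U) := by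
          simp only [Matrix.mul_assoc]
      _ = _ := by rw [DX.hU, Matrix.one_mul]
  have h4 : DX.Uᵀ * (DXi.U * diagonal (fun l : Fin p => DXi.sv l ^ 2) * DXi.Uᵀ) * DXi.U =
      (DX.Uᵀ * DXi.U) * diagonal (fun l : Fin p => DXi.sv l ^ 2) := by
    calc _ = (DX.Uᵀ * DXi.U) * diagonal (fun l : Fin p => DXi.sv l ^ 2) * (DXi.Uᵀ * DXi.U) := by
          simp only [Matrix.mul_assoc]
      _ = _ := by rw [DXi.hU, Matrix.mul_one]
  have h5 : DX.Uᵀ * vecMulVec (fun a => X a i) (fun a => X a i) * DXi.U =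
      vecMulVec (DX.Uᵀ *ᵥ (fun a => X a i)) (DXi.Uᵀ *ᵥ (fun a => X a i)) := by
    rw [Matrix.mul_vecMulVec, Matrix.vecMulVec_mul, mulVec_transpose DXi.U]
  rw [h3, h4, h5] at h2
  have h6 := congrFun (congrFun h2 l) j
  rw [Matrix.add_apply, diagonal_mul, mul_diagonal, vecMulVec_apply] at h6
  linarith

lemma pq_projnorm {p : ℕ} (U : Matrix (Fin p) (Fin p) ℝ) (hU : Uᵀ * U = 1) (r : ℕ) (x : Fin p → ℝ) :
    vnorm ((projr U r) *ᵥ x) = vnorm (fun j : Fin p => if (j : ℕ) < r then (Uᵀ *ᵥ x) j else 0) := by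
  rw [pq_projr, ← mulVec_mulVec, ← mulVec_mulVec, pq_orth U hU]
  congr 1
  ext j
  rw [mulVec_diagonal]
  split_ifs <;> simp

lemma pq_min {n k : ℕ} (z : Fin (n + 1) → Fin k) :
    betaMin (n + 1) k z * ((n : ℝ) + 1) =
      k * ⨅ a : Fin k, ((Finset.univ.filter fun i => z i = a).card : ℝ) := by
  unfold betaMin
  push_cast
  have : (n : ℝ) + 1 ≠ 0 := by positivity
  field_simp

lemma pq_cluster {p n k : ℕ} (z : Fin (n + 1) → Fin k) (θ : Fin k → Fin p → ℝ)
    (Pm : Matrix (Fin p) (Fin (n + 1)) ℝ) (hP : ∀ a j, Pm a j = θ (z j) a) (i : Fin (n + 1))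
    (x : Fin p → ℝ) :
    (⨅ a : Fin k, ((Finset.univ.filter fun i => z i = a).card : ℝ)) * ((fun a => Pm a i) ⬝ᵥ x) ^ 2 ≤
      vnorm (Pmᵀ *ᵥ x) ^ 2 := by
  have h1 : (⨅ a : Fin k, ((Finset.univ.filter fun i => z i = a).card : ℝ)) ≤
      ((Finset.univ.filter fun j => z j = z i).card : ℝ) :=
    ciInf_le ⟨0, by rintro _ ⟨a, rfl⟩; positivity⟩ (z i)
  calc _ ≤ ((Finset.univ.filter fun j => z j = z i).card : ℝ) * ((fun a => Pm a i) ⬝ᵥ x) ^ 2 := by gcongr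
    _ = ∑ j ∈ Finset.univ.filter (fun j => z j = z i), (Pmᵀ *ᵥ x) j ^ 2 := by
        rw [← nsmul_eq_mul, ← Finset.sum_const]
        refine Finset.sum_congr rfl fun j hj => ?_
        have hj := (Finset.mem_filter.1 hj).2
        have : (Pmᵀ *ᵥ x) j = (fun a => Pm a j) ⬝ᵥ x := rfl
        rw [this]
        simp only [hP, hj]
    _ ≤ _ := by
        rw [pq_sq]
        exact Finset.sum_le_sum_of_subset_of_nonneg (Finset.filter_subset _ _) fun _ _ _ => sq_nonneg _

/-- geometric part -/
lemma pq_geom {p n : ℕ} (Pm E X : Matrix (Fin p) (Fin (n + 1)) ℝ) (hX : X = Pm + E)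
    (DP : SVDData p (n + 1) Pm) (r : ℕ) (hr0 : 0 < r) (hrp : r ≤ p) (M m0 : ℝ) (hM : opnorm E ≤ M)
    (hm0 : 1 ≤ m0) (i : Fin (n + 1))
    (hcl : ∀ x : Fin p → ℝ, m0 * ((fun a => Pm a i) ⬝ᵥ x) ^ 2 ≤ vnorm (Pmᵀ *ᵥ x) ^ 2)
    (DX : SVDData p (n + 1) X) (DXi : SVDData p n (X.submatrix id i.succAbove)) :
    ∃ w t s T : ℝ, 0 ≤ w ∧ 0 ≤ t ∧ 0 ≤ s ∧ 0 ≤ T ∧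
      DXi.sv r ≤ DP.sv r + M ∧
      (1 - m0⁻¹) * DP.sv (r - 1) ≤ DXi.sv (r - 1) + M ∧
      (m0 - 1) * w ^ 2 ≤ (DXi.sv r + M) ^ 2 ∧
      (0 < DXi.sv (r - 1) → (m0 - 1) * t ^ 2 ≤ (1 + M / DXi.sv (r - 1)) ^ 2) ∧
      s ≤ w + M ∧
      (0 < DXi.sv (r - 1) →
        T ≤ t + vnorm ((projr DXi.U r).mulVec fun a => E a i) / DXi.sv (r - 1)) ∧
      DX.sv r ^ 2 ≤ DXi.sv r ^ 2 + s ^ 2 ∧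
      (∀ c : ℝ, 0 < c → 0 < DXi.sv (r - 1) →
        (∀ σ : ℝ, DXi.sv (r - 1) ≤ σ → c * σ ≤ σ ^ 2 - DX.sv r ^ 2) →
        fnorm (projr DX.U r - projr DXi.U r) ^ 2 ≤ 2 * (s ^ 2 / c ^ 2 * T ^ 2)) := by
  have hE0 := pq_op_nonneg E
  set U := DXi.U with hUdef
  have hU : Uᵀ * U = 1 := DXi.hU
  have hU' : U * Uᵀ = 1 := mul_eq_one_comm.1 hU
  set θi : Fin p → ℝ := fun a => Pm a i with hθi
  set ε : Fin p → ℝ := fun a => E a i with hε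
  set y : Fin p → ℝ := fun a => X a i with hy
  have hyadd : y = θi + ε := by ext a; simp [hy, hθi, hε, hX]
  set bθ := Uᵀ *ᵥ θi with hbθ
  set bε := Uᵀ *ᵥ ε with hbε
  set b := Uᵀ *ᵥ y with hb
  have hbadd : b = bθ + bε := by rw [hb, hyadd, mulVec_add]
  set σ : ℕ → ℝ := DXi.sv with hσ
  have hσn := DXi.sv_nonneg
  -- leave-one-out comparison
  have hXi : ∀ x : Fin p → ℝ, (X.submatrix id i.succAbove)ᵀ *ᵥ x =
      (Pm.submatrix id i.succAbove)ᵀ *ᵥ x + (E.submatrix id i.succAbove)ᵀ *ᵥ x := by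
    intro x
    rw [← add_mulVec, hX]; rfl
  have hEx : ∀ x : Fin p → ℝ, vnorm ((E.submatrix id i.succAbove)ᵀ *ᵥ x) ≤ M * vnorm x := fun x =>
    (pq_subE E i x).trans (mul_le_mul_of_nonneg_right hM (pq_nonneg _))
  have hXP : ∀ x : Fin p → ℝ, vnorm ((X.submatrix id i.succAbove)ᵀ *ᵥ x) ≤
      vnorm ((Pm.submatrix id i.succAbove)ᵀ *ᵥ x) + M * vnorm x := by
    intro x
    rw [hXi]
    exact (pq_add _ _).trans (by gcongr; exact hEx x)
  have hPX : ∀ x : Fin p → ℝ, vnorm ((Pm.submatrix id i.succAbove)ᵀ *ᵥ x) ≤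
      vnorm ((X.submatrix id i.succAbove)ᵀ *ᵥ x) + M * vnorm x := by
    intro x
    have : (Pm.submatrix id i.succAbove)ᵀ *ᵥ x =
      (X.submatrix id i.succAbove)ᵀ *ᵥ x + -((E.submatrix id i.succAbove)ᵀ *ᵥ x) := by
      rw [hXi]; abel
    rw [this]
    exact (pq_add _ _).trans (by rw [pq_neg]; gcongr; exact hEx x)
  have hPcl : ∀ x : Fin p → ℝ, (m0 - 1) * (θi ⬝ᵥ x) ^ 2 ≤
      (vnorm ((X.submatrix id i.succAbove)ᵀ *ᵥ x) + M * vnorm x) ^ 2 := by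
    intro x
    have h1 := hcl x
    rw [pq_split Pm i] at h1
    have h2 := pow_le_pow_left₀ (pq_nonneg _) (hPX x) 2
    linarith
  have hUU : ∀ v : Fin p → ℝ, Uᵀ *ᵥ (U *ᵥ v) = v := fun v => by
    rw [mulVec_mulVec, hU, one_mulVec]
  have hdotU : ∀ u v : Fin p → ℝ, u ⬝ᵥ (U *ᵥ v) = (Uᵀ *ᵥ u) ⬝ᵥ v := fun u v => by
    rw [dotProduct_mulVec, ← mulVec_transpose]
  set tl : (Fin p → ℝ) → (Fin p → ℝ) := fun v j => if (j : ℕ) < r then 0 else v j with htl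
  set hd : (Fin p → ℝ) → (Fin p → ℝ) := fun v j => if (j : ℕ) < r then v j / σ j else 0 with hhd
  have htladd : tl b = tl bθ + tl bε := by
    ext j; simp only [htl, hbadd, Pi.add_apply]; split_ifs <;> simp
  have hhdadd : hd b = hd bθ + hd bε := by
    ext j; simp only [hhd, hbadd, Pi.add_apply]; split_ifs <;> simp [add_div]
  have hσlow : ∀ j : Fin p, (j : ℕ) < r → σ (r - 1) ≤ σ j := fun j hj =>
    DXi.sv_anti j (r - 1) (by omega)
  refine ⟨vnorm (tl bθ), vnorm (hd bθ), vnorm (tl b), vnorm (hd b), pq_nonneg _, pq_nonneg _,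
    pq_nonneg _, pq_nonneg _, ?_, ?_, ?_, ?_, ?_, ?_, ?_, ?_⟩
  · by_cases hrp' : r < p
    · obtain ⟨x, hx1, hx2, hx3⟩ := pq_dim U DP.U r hrp'
      have h1 := pq_lower DXi x r hx2
      have h2 := pq_upper DP x r hx3
      have h3 := hXP x
      have h4 := pq_split Pm i x
      have h5 : vnorm ((Pm.submatrix id i.succAbove)ᵀ *ᵥ x) ≤ vnorm (Pmᵀ *ᵥ x) := by
        refine (sq_le_sq₀ (pq_nonneg _) (pq_nonneg _)).1 ?_
        nlinarith [sq_nonneg ((fun a => Pm a i) ⬝ᵥ x)]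
      rw [hx1] at h1 h2 h3
      simp only [mul_one] at h1 h2 h3
      linarith
    · rw [show σ r = 0 from DXi.sv_zero r (by omega)]
      have := DP.sv_nonneg r
      linarith
  · obtain ⟨x, hx1, hx2, hx3⟩ := pq_dim DP.U U (r - 1) (by omega)
    have h1 := pq_lower DP x (r - 1) hx2
    have h2 := pq_upper DXi x (r - 1) hx3
    have h3 := hPX x
    have h4 := pq_split Pm i x
    have h5 := hcl x
    rw [hx1] at h1 h2 h3
    simp only [mul_one] at h1 h2 h3
    set A := vnorm (Pmᵀ *ᵥ x) with hA
    set B := vnorm ((Pm.submatrix id i.succAbove)ᵀ *ᵥ x) with hB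
    have hm1 : m0⁻¹ ≤ 1 := inv_le_one_of_one_le₀ hm0
    have hm2 : 0 < m0⁻¹ := by positivity
    have h6 : (1 - m0⁻¹) * A ^ 2 ≤ B ^ 2 := by
      have : (θi ⬝ᵥ x) ^ 2 ≤ m0⁻¹ * A ^ 2 := by
        rw [inv_mul_eq_div, le_div_iff₀ (by linarith)]; linarith
      nlinarith
    have h7 : (1 - m0⁻¹) * A ≤ B := by
      refine (sq_le_sq₀ (mul_nonneg (by linarith) (pq_nonneg _)) (pq_nonneg _)).1 ?_
      have : (1 - m0⁻¹) * ((1 - m0⁻¹) * A ^ 2) ≤ 1 * ((1 - m0⁻¹) * A ^ 2) := by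
        apply mul_le_mul_of_nonneg_right (by linarith)
        exact mul_nonneg (by linarith) (sq_nonneg _)
      rw [mul_pow]; nlinarith
    have h8 : (1 - m0⁻¹) * DP.sv (r - 1) ≤ (1 - m0⁻¹) * A :=
      mul_le_mul_of_nonneg_left h1 (by linarith)
    linarith
  · have h1 := hPcl (U *ᵥ tl bθ)
    have h2 := pq_upper DXi (U *ᵥ tl bθ) r (fun l hl => by rw [hUU]; simp [htl, hl])
    rw [pq_orth U hU] at h1 h2
    have h3 : θi ⬝ᵥ (U *ᵥ tl bθ) = vnorm (tl bθ) ^ 2 := by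
      rw [hdotU, pq_sq]
      simp only [dotProduct, htl]
      refine Finset.sum_congr rfl fun j _ => ?_
      split_ifs
      · simp
      · rw [sq]
    rw [h3] at h1
    set w := vnorm (tl bθ) with hw
    have hw0 : 0 ≤ w := pq_nonneg _
    have h4 := pow_le_pow_left₀ (add_nonneg (pq_nonneg _) (mul_nonneg (hE0.trans hM) hw0))
      (add_le_add_left h2 (M * w)) 2
    rcases hw0.eq_or_lt with h | h
    · rw [← h]; simp; positivity
    · have h5 : (m0 - 1) * w ^ 2 * w ^ 2 ≤ (σ r + M) ^ 2 * w ^ 2 := by nlinarith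
      exact le_of_mul_le_mul_right h5 (by positivity)
  · intro hpos
    set v : Fin p → ℝ := fun j => if (j : ℕ) < r then bθ j / σ j ^ 2 else 0 with hv
    have h1 := hPcl (U *ᵥ v)
    rw [pq_orth U hU] at h1
    set t := vnorm (hd bθ) with ht
    have ht0 : 0 ≤ t := pq_nonneg _
    have h3 : θi ⬝ᵥ (U *ᵥ v) = t ^ 2 := by
      rw [hdotU, ht, pq_sq]
      simp only [dotProduct, hv, hhd]
      refine Finset.sum_congr rfl fun j _ => ?_
      split_ifs with hj
      · have := hσlow j hj
        have : σ j ≠ 0 := by linarith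
        field_simp
        rw [hbθ]; ring
      · simp
    have h4 : vnorm ((X.submatrix id i.succAbove)ᵀ *ᵥ (U *ᵥ v)) = t := by
      refine (sq_eq_sq₀ (pq_nonneg _) ht0).1 ?_
      rw [pq_svd DXi, ← hUdef, hUU, ht, pq_sq]
      refine Finset.sum_congr rfl fun j _ => ?_
      simp only [hv, hhd]
      split_ifs with hj
      · have := hσlow j hj
        have : σ j ≠ 0 := by linarith
        field_simp
        rw [hσ]; ring
      · simp
    have h5 : vnorm v ≤ t / σ (r - 1) := by
      refine (sq_le_sq₀ (pq_nonneg _) (by positivity)).1 ?_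
      rw [div_pow, le_div_iff₀ (by positivity), ht, pq_sq, pq_sq, Finset.sum_mul]
      refine Finset.sum_le_sum fun j _ => ?_
      simp only [hv, hhd]
      split_ifs with hj
      · have h6 := hσlow j hj
        have h7 : 0 < σ j := by linarith
        have h8 : (bθ j / σ j ^ 2) ^ 2 * σ j ^ 2 = (bθ j / σ j) ^ 2 := by field_simp
        rw [← h8]
        gcongr
      · simp
    rw [h3, h4] at h1
    have hM0 : 0 ≤ M := hE0.trans hM
    have h6 : t + M * vnorm v ≤ t * (1 + M / σ (r - 1)) := by
      have := mul_le_mul_of_nonneg_left h5 hM0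
      calc _ ≤ t + M * (t / σ (r - 1)) := by linarith
        _ = _ := by ring
    have h7 := pow_le_pow_left₀ (add_nonneg ht0 (mul_nonneg hM0 (pq_nonneg v))) h6 2
    rcases ht0.eq_or_lt with h | h
    · rw [← h]; simp; positivity
    · have h8 : (m0 - 1) * t ^ 2 * t ^ 2 ≤ (1 + M / σ (r - 1)) ^ 2 * t ^ 2 := by nlinarith
      exact le_of_mul_le_mul_right h8 (by positivity)
  · rw [htladd]
    refine (pq_add _ _).trans ?_
    gcongr
    refine le_trans ?_ ((pq_col E i).trans hM)
    rw [← pq_orthT U hU (fun a => E a i)]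
    unfold vnorm
    apply Real.sqrt_le_sqrt
    refine Finset.sum_le_sum fun j _ => ?_
    simp only [htl]
    split_ifs
    · simp; positivity
    · exact le_rfl
  · intro hpos
    rw [hhdadd]
    refine (pq_add _ _).trans ?_
    gcongr
    rw [pq_projnorm U hU, le_div_iff₀ hpos]
    refine (sq_le_sq₀ (mul_nonneg (pq_nonneg _) hpos.le) (pq_nonneg _)).1 ?_
    rw [mul_pow, pq_sq, pq_sq, Finset.sum_mul]
    refine Finset.sum_le_sum fun j _ => ?_
    simp only [hhd]
    split_ifs with hj
    · have h6 := hσlow j hj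
      have h7 : 0 < σ j := by linarith
      have h8 : (bε j / σ j) ^ 2 * σ j ^ 2 = bε j ^ 2 := by field_simp
      calc _ ≤ (bε j / σ j) ^ 2 * σ j ^ 2 := by gcongr
        _ = _ := h8
    · simp
  · by_cases hrp' : r < p
    · obtain ⟨x, hx1, hx2, hx3⟩ := pq_dim DX.U U r hrp'
      have h1 := pq_lower DX x r hx2
      have h2 := pq_upper DXi x r hx3
      have h4 := pq_split X i x
      rw [hx1] at h1 h2
      simp only [mul_one] at h1 h2
      have h5 : (y ⬝ᵥ x) ^ 2 ≤ vnorm (tl b) ^ 2 := by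
        have e0 : x = U *ᵥ (Uᵀ *ᵥ x) := by rw [mulVec_mulVec, hU', one_mulVec]
        have e1 : y ⬝ᵥ x = tl b ⬝ᵥ (Uᵀ *ᵥ x) := by
          conv_lhs => rw [e0, hdotU]
          simp only [dotProduct, htl]
          refine Finset.sum_congr rfl fun j _ => ?_
          split_ifs with hj
          · rw [hx3 j hj]; simp
          · rfl
        have e2 := pq_cs (tl b) (Uᵀ *ᵥ x)
        have e3 := pq_cs (-tl b) (Uᵀ *ᵥ x)
        rw [pq_orthT U hU, hx1, mul_one] at e2 e3
        rw [pq_neg, neg_dotProduct] at e3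
        rw [e1]
        exact sq_le_sq' (by linarith) e2
      have h6 := pow_le_pow_left₀ (DX.sv_nonneg r) h1 2
      have h7 := pow_le_pow_left₀ (pq_nonneg _) h2 2
      linarith
    · rw [DX.sv_zero r (by omega)]
      nlinarith [sq_nonneg (σ r), sq_nonneg (vnorm (tl b))]
  · intro c hc hpos hgap
    rw [pq_projdiff DX.U U DX.hU hU]
    have hW' := mul_eq_one_comm.1 DX.hU
    have hGb : (DX.Uᵀ * U) *ᵥ b = DX.Uᵀ *ᵥ y := by
      rw [hb, mulVec_mulVec, Matrix.mul_assoc, hU', Matrix.mul_one]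
    have := pq_core (DX.Uᵀ * U) (by
      rw [transpose_mul, transpose_transpose, Matrix.mul_assoc, ← Matrix.mul_assoc DX.U, hW',
        Matrix.one_mul, hU]) b (fun j => σ j) (fun l => DX.sv l) r c (vnorm (tl b) ^ 2) hc
      (fun j hj => lt_of_lt_of_le hpos (hσlow j hj))
      (fun l j => by rw [hGb]; exact pq_ident X i DX DXi l j)
      (fun l j hl hj => by
        have h1 := hgap (σ j) (hσlow j hj)
        have h2 := pow_le_pow_left₀ (DX.sv_nonneg l) (DX.sv_anti r l (by omega)) 2
        linarith)
      (by rw [pq_sq])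
    rw [pq_sq (hd b)]
    linarith

set_option maxHeartbeats 1000000 in
/-- numeric part -/
lemma pq_num (F M m0 lam lam' sg sg' sh w t s T e R V : ℝ)
    (hF : 0 ≤ F) (hM : 0 < M) (he : 0 < e) (hem : e ^ 2 * m0 = 1) (hm0 : 10 ≤ m0)
    (hlam' : 0 ≤ lam') (hsg' : 0 ≤ sg') (hel : e * lam' ≤ M) (hgap : 16 * M < lam - lam')
    (heR : e ≤ R) (hV : 0 ≤ V)
    (hw : 0 ≤ w) (ht : 0 ≤ t) (hs : 0 ≤ s) (hT : 0 ≤ T)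
    (h1 : sg' ≤ lam' + M) (h2 : (1 - m0⁻¹) * lam ≤ sg + M)
    (h3 : (m0 - 1) * w ^ 2 ≤ (sg' + M) ^ 2)
    (h4 : 0 < sg → (m0 - 1) * t ^ 2 ≤ (1 + M / sg) ^ 2)
    (h5 : s ≤ w + M) (h6 : 0 < sg → T ≤ t + V / sg)
    (h7 : sh ^ 2 ≤ sg' ^ 2 + s ^ 2)
    (h8 : ∀ c : ℝ, 0 < c → 0 < sg → (∀ σ : ℝ, sg ≤ σ → c * σ ≤ σ ^ 2 - sh ^ 2) →
      F ^ 2 ≤ 2 * (s ^ 2 / c ^ 2 * T ^ 2)) :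
    F ≤ 128 / ((lam - lam') / M) * (R + V / lam) := by
  have hm : 0 < m0 := by linarith
  have hinv : m0⁻¹ = e ^ 2 := by field_simp; linarith
  rw [hinv] at h2
  have he10 : e ^ 2 ≤ 1 / 10 := by
    rw [← hinv, inv_le_comm₀ hm (by norm_num)]; norm_num; exact hm0
  have he1 : e ≤ 0.32 := by nlinarith
  set g0 := lam - lam' with hg0
  have hlam : lam = g0 + lam' := by rw [hg0]; ring
  have hlam0 : 0 < lam := by linarith
  have hel2 : e ^ 2 * lam' ≤ 0.32 * M := by
    have : e * (e * lam') ≤ 0.32 * M := by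
      apply mul_le_mul he1 hel (by positivity) (by norm_num)
    nlinarith
  have hg : 0.75 * g0 ≤ sg - sg' := by
    have : (1 - e ^ 2) * lam = g0 - e ^ 2 * g0 + lam' - e ^ 2 * lam' := by rw [hlam]; ring
    have h' : e ^ 2 * g0 ≤ 1 / 10 * g0 := by gcongr; linarith
    linarith
  have hsg : 0.8 * lam ≤ sg := by
    have h' : e ^ 2 * lam ≤ 1 / 10 * lam := by gcongr
    linarith
  have hsg0 : 0 < sg := by linarith
  have hm9 : 0.9 * m0 ≤ m0 - 1 := by linarith
  have hw2 : w ≤ 2 * M := by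
    refine (sq_le_sq₀ hw (by positivity)).1 ?_
    have a1 : 0.9 * m0 * w ^ 2 ≤ (lam' + 2 * M) ^ 2 := by
      calc _ ≤ (m0 - 1) * w ^ 2 := by gcongr
        _ ≤ _ := h3
        _ ≤ _ := pow_le_pow_left₀ (by linarith) (by linarith) 2
    have a2 : 0.9 * w ^ 2 ≤ (e * lam' + 2 * (e * M)) ^ 2 := by
      have := mul_le_mul_of_nonneg_left a1 (sq_nonneg e)
      have e1 : e ^ 2 * (0.9 * m0 * w ^ 2) = 0.9 * w ^ 2 := by
        linear_combination (0.9 * w ^ 2) * hem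
      have e2 : e ^ 2 * (lam' + 2 * M) ^ 2 = (e * lam' + 2 * (e * M)) ^ 2 := by ring
      linarith
    have a3 : e * lam' + 2 * (e * M) ≤ 1.64 * M := by nlinarith
    have a4 := pow_le_pow_left₀ (by positivity) a3 2
    nlinarith [sq_nonneg M]
  have hs3 : s ≤ 3 * M := by linarith
  have ht2 : t ≤ 1.2 * e := by
    refine (sq_le_sq₀ ht (by positivity)).1 ?_
    have b0 : M / sg ≤ 0.1 := by rw [div_le_iff₀ hsg0]; linarith
    have b1 : 0.9 * m0 * t ^ 2 ≤ (1.1 : ℝ) ^ 2 := by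
      calc _ ≤ (m0 - 1) * t ^ 2 := by gcongr
        _ ≤ _ := h4 hsg0
        _ ≤ _ := by gcongr; linarith
    have := mul_le_mul_of_nonneg_left b1 (sq_nonneg e)
    have e1 : e ^ 2 * (0.9 * m0 * t ^ 2) = 0.9 * t ^ 2 := by
      linear_combination (0.9 * t ^ 2) * hem
    nlinarith [sq_nonneg e]
  have hT2 : T ≤ 1.25 * (R + V / lam) := by
    have c1 : V / sg ≤ 1.25 * (V / lam) := by
      rw [div_le_iff₀ hsg0]
      have : 1.25 * (V / lam) * (0.8 * lam) = V := by field_simp; norm_num; ring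
      have h' : 1.25 * (V / lam) * (0.8 * lam) ≤ 1.25 * (V / lam) * sg := by gcongr
      linarith
    have := h6 hsg0
    linarith
  have hg0p : 0 < g0 := by linarith
  have key := h8 (0.7 * g0) (by positivity) hsg0 (by
    intro σ hσ
    have d1 : s ≤ (sg - sg') / 4 := by linarith
    have d2 : s ^ 2 ≤ ((sg - sg') / 4) ^ 2 := pow_le_pow_left₀ hs d1 2
    have d3 : 0.7 * g0 ≤ 15 / 16 * (sg - sg') := by linarith
    have d0 : 0 < σ := by linarith
    have d4 : 0.7 * g0 * σ ≤ 15 / 16 * (sg - sg') * σ := by exact mul_le_mul_of_nonneg_right d3 d0.le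
    have d5 : (sg - sg') * (sg - sg') ≤ (sg - sg') * σ := by
      apply mul_le_mul_of_nonneg_left <;> linarith
    have d6 : (sg - sg') * σ ≤ (σ - sg') * σ :=
      mul_le_mul_of_nonneg_right (by linarith) d0.le
    have d7 : sg' * sg' ≤ sg' * σ := by
      apply mul_le_mul_of_nonneg_left _ hsg'; linarith
    have d8 : σ ^ 2 - sg' ^ 2 ≥ (σ - sg') * σ := by linarith
    have d9 : s ^ 2 ≤ 1 / 16 * ((sg - sg') * σ) := by linarith
    linarith)
  set Q := R + V / lam with hQ
  have hQ0 : 0 ≤ Q := by have : 0 ≤ V / lam := by positivity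
                         linarith
  refine (sq_le_sq₀ hF (by positivity)).1 (key.trans ?_)
  have f1 : s ^ 2 ≤ (3 * M) ^ 2 := by gcongr
  have f2 : T ^ 2 ≤ (1.25 * Q) ^ 2 := by gcongr
  calc 2 * (s ^ 2 / (0.7 * g0) ^ 2 * T ^ 2) ≤ 2 * ((3 * M) ^ 2 / (0.7 * g0) ^ 2 * (1.25 * Q) ^ 2) := by
        gcongr
    _ = (2 * 9 * 1.25 ^ 2 / 0.7 ^ 2) * (M / g0 * Q) ^ 2 := by field_simp; norm_num; ring
    _ ≤ 128 ^ 2 * (M / g0 * Q) ^ 2 := by exact mul_le_mul_of_nonneg_right (by norm_num) (sq_nonneg _)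
    _ = _ := by field_simp

/-- **Theorem 7 (singular subspace perturbation in mixture models, general `r`).**
Assume `βn/k² ≥ 10` and, for some `r ∈ [k]`,
`ρ̃₀ := (λ_r − λ_{r+1}) / max{‖E‖, √(k²/(βn)) λ_{r+1}} > 16`.  Then for every `i`,
`‖Û_{1:r}Û_{1:r}ᵀ − Û_{−i,1:r}Û_{−i,1:r}ᵀ‖_F ≤ (128/ρ̃₀)(√(kr/(βn)) + ‖Û_{−i,1:r}Û_{−i,1:r}ᵀ ε_i‖/λ_r)`. -/
theorem mixture_perturbation_general_r
    (p n k : ℕ) (z : Fin (n + 1) → Fin k) (θ : Fin k → Fin p → ℝ)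
    (Pm E X : Matrix (Fin p) (Fin (n + 1)) ℝ)
    (hP : ∀ a j, Pm a j = θ (z j) a) (hX : X = Pm + E)
    (hβ : 10 ≤ betaMin (n + 1) k z * ((n : ℝ) + 1) / (k : ℝ) ^ 2)
    (DP : SVDData p (n + 1) Pm)
    (r : ℕ) (hr0 : 0 < r) (hrk : r ≤ k)
    (hgap : 16 < (DP.sv (r - 1) - DP.sv r) /
      max (opnorm E)
        (Real.sqrt ((k : ℝ) ^ 2 / (betaMin (n + 1) k z * ((n : ℝ) + 1))) * DP.sv r))
    (DX : SVDData p (n + 1) X) (i : Fin (n + 1))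
    (DXi : SVDData p n (X.submatrix id i.succAbove)) :
    fnorm (projr DX.U r - projr DXi.U r) ≤
      128 / ((DP.sv (r - 1) - DP.sv r) /
          max (opnorm E)
            (Real.sqrt ((k : ℝ) ^ 2 / (betaMin (n + 1) k z * ((n : ℝ) + 1))) * DP.sv r)) *
        (Real.sqrt ((k : ℝ) * r / (betaMin (n + 1) k z * ((n : ℝ) + 1))) +
          vnorm ((projr DXi.U r).mulVec fun a => E a i) / DP.sv (r - 1)) := by
  have hk : 0 < k := lt_of_le_of_lt (Nat.zero_le _) (z i).isLt
  have hkR : (1 : ℝ) ≤ k := by exact_mod_cast hk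
  have hrR : (1 : ℝ) ≤ r := by exact_mod_cast hr0
  have hN := pq_min z
  have hcl := pq_cluster z θ Pm hP i
  set N := betaMin (n + 1) k z * ((n : ℝ) + 1) with hNdef
  set m0 := ⨅ a : Fin k, ((Finset.univ.filter fun i => z i = a).card : ℝ) with hm0def
  have hm0k : 10 * (k : ℝ) ≤ m0 := by
    rw [hN, le_div_iff₀ (by positivity)] at hβ
    have : (k : ℝ) * (10 * k) ≤ k * m0 := by linarith
    exact le_of_mul_le_mul_left this (by positivity)
  have hm0 : 10 ≤ m0 := by linarith
  have hm0p : 0 < m0 := by linarith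
  set M := max (opnorm E) (Real.sqrt ((k : ℝ) ^ 2 / N) * DP.sv r) with hMdef
  have hEM : opnorm E ≤ M := le_max_left _ _
  have hMq : Real.sqrt ((k : ℝ) ^ 2 / N) * DP.sv r ≤ M := le_max_right _ _
  have hM0 : 0 ≤ M := (pq_op_nonneg E).trans hEM
  have hMp : 0 < M := by
    rcases hM0.eq_or_lt with h | h
    · rw [← h] at hgap; norm_num at hgap
    · exact h
  have hgap' : 16 * M < DP.sv (r - 1) - DP.sv r := by rwa [lt_div_iff₀ hMp] at hgap
  have hlam' := DP.sv_nonneg r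
  have hrp : r ≤ p := by
    by_contra hcon
    have := DP.sv_zero (r - 1) (by omega)
    linarith
  set e := (Real.sqrt m0)⁻¹ with he
  have hem : e ^ 2 * m0 = 1 := by
    rw [he, inv_pow, Real.sq_sqrt hm0p.le]; field_simp
  have he0 : 0 < e := by positivity
  have he' : e = Real.sqrt (1 / m0) := by rw [he, ← Real.sqrt_inv, one_div]
  have heq : e ≤ Real.sqrt ((k : ℝ) ^ 2 / N) := by
    rw [he']
    apply Real.sqrt_le_sqrt
    rw [hN, div_le_div_iff₀ hm0p (by positivity)]
    have : (k : ℝ) * m0 * 1 ≤ k * m0 * k := by gcongr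
    nlinarith
  have heR : e ≤ Real.sqrt ((k : ℝ) * r / N) := by
    rw [he']
    apply Real.sqrt_le_sqrt
    rw [hN, div_le_div_iff₀ hm0p (by positivity)]
    have : (k : ℝ) * m0 * 1 ≤ k * m0 * r := by gcongr
    nlinarith
  obtain ⟨w, t, s, T, hw, ht, hs, hT, h1, h2, h3, h4, h5, h6, h7, h8⟩ :=
    pq_geom Pm E X hX DP r hr0 hrp M m0 hEM (by linarith) i hcl DX DXi
  exact pq_num _ M m0 _ _ _ _ _ w t s T e _ _ (Real.sqrt_nonneg _) hMp he0 hem hm0 hlam'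
    (DXi.sv_nonneg r) ((mul_le_mul_of_nonneg_right heq hlam').trans hMq) hgap' heR (pq_nonneg _)
    hw ht hs hT h1 h2 h3 h4 h5 h6 h7 h8
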